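/- arXiv:2401.01077 — 2 statements merged into one kernel-verified Lean document; each statement's English description precedes it below -/
import Mathlib

section
/- Let n and T be positive integers, let H = ℝⁿ with the Euclidean inner product, and let C ⊆ H be a nonempty convex set whose diameter is at most F, i.e. ‖u − v‖ ≤ F for all u, v ∈ C. Let P : H → H be a map satisfying: for every z ∈ H, P z ∈ C and ‖P z − u‖ ≤ ‖z − u‖ for all u ∈ C. Let h_1,…,h_T : H → ℝ, let c_1 ∈ C, and let g_1,…,g_T ∈ H be subgradients with ‖g_t‖ ≤ G and h_t(u) ≥ h_t(c_t) + ⟨g_t, u − c_t⟩ for all u ∈ C and all t. Define the online gradient descent iterates c_{t+1} = P(c_t − η_t g_t) with step sizes η_t = 1/√t. Then for every u ∈ C, ∑_{t=1}^T h_t(c_t) − ∑_{t=1}^T h_t(u) ≤ (F²/2 + G²) · √T. -/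
/-!
Since `P` is nonexpansive towards `u`, one step bounds the linearised loss `⟪g_t, c_t - u⟫` by
`(‖c_t - u‖² - ‖c_{t+1} - u‖²) / (2 η_t)` plus the error `η_t ‖g_t‖² / 2`. As `1 / (2 η_t)` is
increasing and `‖c_t - u‖² ≤ F²`, summation by parts bounds the sum of the first terms by
`F² / (2 η_T) = F² √T / 2`, while the errors add up to at most `G² √T` because
`∑ 1 / √t ≤ 2 √T`.
-/

section OnlineGradientDescent

open Finset
open scoped RealInnerProductSpace

theorem one_div_sqrt_add_one_le {x : ℝ} (hx : 0 ≤ x) :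
    1 / √(x + 1) ≤ 2 * (√(x + 1) - √x) := by
  have hmono : √x ≤ √(x + 1) := Real.sqrt_le_sqrt (le_add_of_nonneg_right zero_le_one)
  rw [div_le_iff₀ (by positivity)]
  calc (1 : ℝ) = √(x + 1) ^ 2 - √x ^ 2 := by
        rw [Real.sq_sqrt (by positivity), Real.sq_sqrt hx, add_sub_cancel_left]
    _ = (√(x + 1) - √x) * (√(x + 1) + √x) := by ring
    _ ≤ (√(x + 1) - √x) * (√(x + 1) + √(x + 1)) := by
        gcongr
    _ = 2 * (√(x + 1) - √x) * √(x + 1) := by ring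

theorem sum_Icc_one_div_sqrt_le (n : ℕ) : ∑ t ∈ Icc 1 n, 1 / √(t : ℝ) ≤ 2 * √n := by
  induction n with
  | zero => simp
  | succ n ih =>
    rw [sum_Icc_succ_top n.succ_pos, Nat.cast_add_one]
    linarith [one_div_sqrt_add_one_le (Nat.cast_nonneg (α := ℝ) n)]

theorem sum_Icc_mul_sub_succ_le {R : Type*} [Ring R] [PartialOrder R] [IsOrderedRing R]
    {w d : ℕ → R} {B : R} {T : ℕ} (hT : 1 ≤ T) (hw : MonotoneOn w (Set.Icc 1 T))
    (hw₁ : 0 ≤ w 1) (hd : ∀ t ∈ Icc 1 T, d t ≤ B) :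
    ∑ t ∈ Icc 1 T, w t * (d t - d (t + 1)) ≤ w T * (B - d (T + 1)) := by
  induction T, hT using Nat.le_induction with
  | base =>
    simpa using mul_le_mul_of_nonneg_left (sub_le_sub_right (hd 1 (by simp)) (d 2)) hw₁
  | succ T hT ih =>
    have hw_step : w T ≤ w (T + 1) := hw ⟨hT, T.le_succ⟩ ⟨by lia, le_rfl⟩ T.le_succ
    have hd_step : 0 ≤ B - d (T + 1) := sub_nonneg.2 (hd _ (by simp))
    have ih := ih (hw.mono (Set.Icc_subset_Icc_right T.le_succ))
      fun t ht ↦ hd t (Icc_subset_Icc_right T.le_succ ht)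
    calc ∑ t ∈ Icc 1 (T + 1), w t * (d t - d (t + 1))
        = ∑ t ∈ Icc 1 T, w t * (d t - d (t + 1)) + w (T + 1) * (d (T + 1) - d (T + 1 + 1)) :=
          sum_Icc_succ_top (by lia) _
      _ ≤ w (T + 1) * (B - d (T + 1)) + w (T + 1) * (d (T + 1) - d (T + 1 + 1)) := by
          gcongr
          exact ih.trans (mul_le_mul_of_nonneg_right hw_step hd_step)
      _ = w (T + 1) * (B - d (T + 1 + 1)) := by rw [← mul_add, sub_add_sub_cancel]

variable {E : Type*} [SeminormedAddCommGroup E] [InnerProductSpace ℝ E]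

theorem inner_sub_le_of_norm_sub_le_norm_sub_smul_sub {x y g u : E} {η : ℝ} (hη : 0 < η)
    (hy : ‖y - u‖ ≤ ‖x - η • g - u‖) :
    ⟪g, x - u⟫ ≤ 1 / (2 * η) * (‖x - u‖ ^ 2 - ‖y - u‖ ^ 2) + η / 2 * ‖g‖ ^ 2 := by
  have hexpand : ‖x - η • g - u‖ ^ 2 = ‖x - u‖ ^ 2 - 2 * η * ⟪g, x - u⟫ + η ^ 2 * ‖g‖ ^ 2 := by
    rw [sub_right_comm, norm_sub_sq_real, inner_smul_right, real_inner_comm, norm_smul, mul_pow,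
      Real.norm_eq_abs, sq_abs]
    ring
  have hsq : ‖y - u‖ ^ 2 ≤ ‖x - u‖ ^ 2 - 2 * η * ⟪g, x - u⟫ + η ^ 2 * ‖g‖ ^ 2 :=
    hexpand ▸ pow_le_pow_left₀ (norm_nonneg _) hy 2
  calc ⟪g, x - u⟫
      = 1 / (2 * η) * (2 * η * ⟪g, x - u⟫) := by field_simp
    _ ≤ 1 / (2 * η) * (‖x - u‖ ^ 2 - ‖y - u‖ ^ 2 + η ^ 2 * ‖g‖ ^ 2) := by
        gcongr
        linarith
    _ = 1 / (2 * η) * (‖x - u‖ ^ 2 - ‖y - u‖ ^ 2) + η / 2 * ‖g‖ ^ 2 := by field_simp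

theorem sum_inner_sub_le_of_antitoneOn_step {c g : ℕ → E} {u : E} {η : ℕ → ℝ} {F : ℝ} {T : ℕ}
    (hT : 1 ≤ T) (hη : ∀ t ∈ Icc 1 T, 0 < η t) (hη_anti : AntitoneOn η (Set.Icc 1 T))
    (hF : ∀ t ∈ Icc 1 T, ‖c t - u‖ ≤ F)
    (hstep : ∀ t ∈ Icc 1 T, ‖c (t + 1) - u‖ ≤ ‖c t - η t • g t - u‖) :
    ∑ t ∈ Icc 1 T, ⟪g t, c t - u⟫ ≤
      F ^ 2 / (2 * η T) + ∑ t ∈ Icc 1 T, η t / 2 * ‖g t‖ ^ 2 := by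
  have hη_first : 0 < η 1 := hη 1 (left_mem_Icc.2 hT)
  have hη_last : 0 < η T := hη T (right_mem_Icc.2 hT)
  have hw : MonotoneOn (fun t ↦ 1 / (2 * η t)) (Set.Icc 1 T) := fun s hs t ht hst ↦
    one_div_le_one_div_of_le (mul_pos two_pos (hη t (mem_Icc.2 ht)))
      (mul_le_mul_of_nonneg_left (hη_anti hs ht hst) two_pos.le)
  have hdist : ∀ t ∈ Icc 1 T, ‖c t - u‖ ^ 2 ≤ F ^ 2 := fun t ht ↦
    pow_le_pow_left₀ (norm_nonneg _) (hF t ht) 2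
  calc ∑ t ∈ Icc 1 T, ⟪g t, c t - u⟫
      ≤ ∑ t ∈ Icc 1 T, (1 / (2 * η t) * (‖c t - u‖ ^ 2 - ‖c (t + 1) - u‖ ^ 2) +
          η t / 2 * ‖g t‖ ^ 2) := sum_le_sum fun t ht ↦
        inner_sub_le_of_norm_sub_le_norm_sub_smul_sub (hη t ht) (hstep t ht)
    _ ≤ 1 / (2 * η T) * (F ^ 2 - ‖c (T + 1) - u‖ ^ 2) +
          ∑ t ∈ Icc 1 T, η t / 2 * ‖g t‖ ^ 2 := by
        rw [sum_add_distrib]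
        gcongr
        exact sum_Icc_mul_sub_succ_le hT hw (by positivity) hdist
    _ ≤ 1 / (2 * η T) * F ^ 2 + ∑ t ∈ Icc 1 T, η t / 2 * ‖g t‖ ^ 2 := by
        gcongr
        exact sub_le_self _ (sq_nonneg _)
    _ = F ^ 2 / (2 * η T) + ∑ t ∈ Icc 1 T, η t / 2 * ‖g t‖ ^ 2 := by rw [one_div_mul_eq_div]

theorem sum_inner_sub_le_of_one_div_sqrt_step {c g : ℕ → E} {u : E} {F G : ℝ} {T : ℕ}
    (hF : ∀ t ∈ Icc 1 T, ‖c t - u‖ ≤ F) (hG : ∀ t ∈ Icc 1 T, ‖g t‖ ≤ G)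
    (hstep : ∀ t ∈ Icc 1 T, ‖c (t + 1) - u‖ ≤ ‖c t - (1 / √(t : ℝ)) • g t - u‖) :
    ∑ t ∈ Icc 1 T, ⟪g t, c t - u⟫ ≤ (F ^ 2 / 2 + G ^ 2) * √T := by
  obtain rfl | hT := T.eq_zero_or_pos
  · simp
  have hcast_pos : ∀ t ∈ Icc 1 T, 0 < (t : ℝ) := fun t ht ↦ Nat.cast_pos.2 (mem_Icc.1 ht).1
  have hη : ∀ t ∈ Icc 1 T, 0 < 1 / √(t : ℝ) := fun t ht ↦
    one_div_pos.2 (Real.sqrt_pos.2 (hcast_pos t ht))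
  have hη_anti : AntitoneOn (fun t : ℕ ↦ 1 / √(t : ℝ)) (Set.Icc 1 T) := fun s hs t _ hst ↦
    one_div_le_one_div_of_le (Real.sqrt_pos.2 (hcast_pos s (mem_Icc.2 hs)))
      (Real.sqrt_le_sqrt (Nat.cast_le.2 hst))
  have herror : ∑ t ∈ Icc 1 T, 1 / √(t : ℝ) / 2 * ‖g t‖ ^ 2 ≤ G ^ 2 * √T :=
    calc ∑ t ∈ Icc 1 T, 1 / √(t : ℝ) / 2 * ‖g t‖ ^ 2
        ≤ ∑ t ∈ Icc 1 T, 1 / √(t : ℝ) / 2 * G ^ 2 := by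
          gcongr with t ht
          exact hG t ht
      _ = G ^ 2 / 2 * ∑ t ∈ Icc 1 T, 1 / √(t : ℝ) := by
          rw [← sum_mul, ← sum_div]
          ring
      _ ≤ G ^ 2 / 2 * (2 * √T) := by
          gcongr
          exact sum_Icc_one_div_sqrt_le T
      _ = G ^ 2 * √T := by ring
  calc ∑ t ∈ Icc 1 T, ⟪g t, c t - u⟫
      ≤ F ^ 2 / (2 * (1 / √T)) + ∑ t ∈ Icc 1 T, 1 / √(t : ℝ) / 2 * ‖g t‖ ^ 2 :=
        sum_inner_sub_le_of_antitoneOn_step hT hη hη_anti hF hstep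
    _ ≤ F ^ 2 / (2 * (1 / √T)) + G ^ 2 * √T := by gcongr
    _ = (F ^ 2 / 2 + G ^ 2) * √T := by field_simp

theorem sum_sub_sum_le_sum_inner_of_subgradient {ι : Type*} {s : Finset ι} {h : ι → E → ℝ}
    {c g : ι → E} {u : E} (hsub : ∀ t ∈ s, h t (c t) + ⟪g t, u - c t⟫ ≤ h t u) :
    ∑ t ∈ s, h t (c t) - ∑ t ∈ s, h t u ≤ ∑ t ∈ s, ⟪g t, c t - u⟫ := by
  rw [← sum_sub_distrib]
  refine sum_le_sum fun t ht ↦ ?_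
  rw [← neg_sub u (c t), inner_neg_right]
  linarith [hsub t ht]

theorem stmt6_general {C : Set E} {F G : ℝ} {T : ℕ} (hdiam : ∀ u ∈ C, ∀ v ∈ C, ‖u - v‖ ≤ F)
    {P : E → E} (hPmem : ∀ z, P z ∈ C) (hPnonexp : ∀ z, ∀ u ∈ C, ‖P z - u‖ ≤ ‖z - u‖)
    {h : ℕ → E → ℝ} {c g : ℕ → E} (hc1 : c 1 ∈ C) (hgbound : ∀ t ∈ Icc 1 T, ‖g t‖ ≤ G)
    (hsubgrad : ∀ t ∈ Icc 1 T, ∀ u ∈ C, h t (c t) + ⟪g t, u - c t⟫ ≤ h t u)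
    (hstep : ∀ t ∈ Icc 1 T, c (t + 1) = P (c t - (1 / √(t : ℝ)) • g t)) :
    ∀ u ∈ C, ∑ t ∈ Icc 1 T, h t (c t) - ∑ t ∈ Icc 1 T, h t u ≤
      (F ^ 2 / 2 + G ^ 2) * √T := by
  intro u hu
  have hmem : ∀ t ∈ Icc 1 T, c t ∈ C := by
    rintro (_ | _ | t) ht
    · simp at ht
    · exact hc1
    · rw [hstep (t + 1) (by simp only [mem_Icc] at ht ⊢; lia)]
      exact hPmem _
  calc ∑ t ∈ Icc 1 T, h t (c t) - ∑ t ∈ Icc 1 T, h t u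
      ≤ ∑ t ∈ Icc 1 T, ⟪g t, c t - u⟫ :=
        sum_sub_sum_le_sum_inner_of_subgradient fun t ht ↦ hsubgrad t ht u hu
    _ ≤ (F ^ 2 / 2 + G ^ 2) * √T :=
        sum_inner_sub_le_of_one_div_sqrt_step (fun t ht ↦ hdiam _ (hmem t ht) u hu) hgbound
          fun t ht ↦ hstep t ht ▸ hPnonexp _ u hu

end OnlineGradientDescent

/-- Regret bound of Online Gradient Descent with step sizes `η_t = 1/√t`. -/
theorem stmt6
    (n T : ℕ) (hn : 0 < n) (hT : 0 < T)
    (C : Set (EuclideanSpace ℝ (Fin n))) (hCne : C.Nonempty) (hCconv : Convex ℝ C)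
    (F G : ℝ)
    (hdiam : ∀ u ∈ C, ∀ v ∈ C, ‖u - v‖ ≤ F)
    (P : EuclideanSpace ℝ (Fin n) → EuclideanSpace ℝ (Fin n))
    (hPmem : ∀ z, P z ∈ C)
    (hPnonexp : ∀ z, ∀ u ∈ C, ‖P z - u‖ ≤ ‖z - u‖)
    (h : ℕ → EuclideanSpace ℝ (Fin n) → ℝ)
    (c g : ℕ → EuclideanSpace ℝ (Fin n))
    (hc1 : c 1 ∈ C)
    (hgbound : ∀ t ∈ Finset.Icc 1 T, ‖g t‖ ≤ G)
    (hsubgrad : ∀ t ∈ Finset.Icc 1 T, ∀ u ∈ C,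
      h t (c t) + (inner ℝ (g t) (u - c t) : ℝ) ≤ h t u)
    (hstep : ∀ t ∈ Finset.Icc 1 T,
      c (t + 1) = P (c t - (1 / Real.sqrt t) • g t)) :
    ∀ u ∈ C, ∑ t ∈ Finset.Icc 1 T, h t (c t) - ∑ t ∈ Finset.Icc 1 T, h t u
      ≤ (F ^ 2 / 2 + G ^ 2) * Real.sqrt T := by
  exact stmt6_general hdiam hPmem hPnonexp hc1 hgbound hsubgrad hstep
end

section
/- Let H be a real inner product space, let C ⊆ H be a nonempty set, and let P : H → H be a map satisfying: for every z ∈ H, P z ∈ C and ‖P z − u‖ ≤ ‖z − u‖ for all u ∈ C. Let c ∈ C, g ∈ H, η > 0, and set c' = P(c − η g). Then for every u ∈ C, ⟨g, c − u⟩ ≤ ( ‖c − u‖² − ‖c' − u‖² ) / (2η) + (η/2) ‖g‖². -/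
section GradientStep

variable {H : Type*} [SeminormedAddCommGroup H] [InnerProductSpace ℝ H]

lemma norm_sub_smul_sq_real (x g : H) (η : ℝ) :
    ‖x - η • g‖ ^ 2 = ‖x‖ ^ 2 - 2 * η * inner ℝ g x + η ^ 2 * ‖g‖ ^ 2 := by
  rw [norm_sub_sq_real, real_inner_smul_right, real_inner_comm, norm_smul, mul_pow,
    Real.norm_eq_abs, sq_abs, mul_assoc]

lemma real_inner_eq_norm_sq_sub_norm_sub_smul_sq_div (x g : H) {η : ℝ} (hη : η ≠ 0) :
    inner ℝ g x = (‖x‖ ^ 2 - ‖x - η • g‖ ^ 2) / (2 * η) + (η / 2) * ‖g‖ ^ 2 := by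
  rw [norm_sub_smul_sq_real]
  field_simp
  ring

theorem stmt7_general {c c' g u : H} {η : ℝ} (hη : 0 < η)
    (hc' : ‖c' - u‖ ≤ ‖c - η • g - u‖) :
    inner ℝ g (c - u)
      ≤ (‖c - u‖ ^ 2 - ‖c' - u‖ ^ 2) / (2 * η) + (η / 2) * ‖g‖ ^ 2 := by
  rw [sub_right_comm] at hc'
  calc inner ℝ g (c - u)
      = (‖c - u‖ ^ 2 - ‖c - u - η • g‖ ^ 2) / (2 * η) + (η / 2) * ‖g‖ ^ 2 :=
        real_inner_eq_norm_sq_sub_norm_sub_smul_sq_div (c - u) g hη.ne'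
    _ ≤ (‖c - u‖ ^ 2 - ‖c' - u‖ ^ 2) / (2 * η) + (η / 2) * ‖g‖ ^ 2 := by gcongr

end GradientStep

/-- Single-step descent inequality for a projected gradient step. -/
theorem stmt7
    (H : Type*) [NormedAddCommGroup H] [InnerProductSpace ℝ H]
    (C : Set H) (hCne : C.Nonempty)
    (P : H → H) (hPmem : ∀ z, P z ∈ C)
    (hPnonexp : ∀ z, ∀ u ∈ C, ‖P z - u‖ ≤ ‖z - u‖)
    (c : H) (hc : c ∈ C) (g : H) (η : ℝ) (hη : 0 < η) :
    ∀ u ∈ C, (inner ℝ g (c - u) : ℝ)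
      ≤ (‖c - u‖ ^ 2 - ‖P (c - η • g) - u‖ ^ 2) / (2 * η)
        + (η / 2) * ‖g‖ ^ 2 :=
  fun u hu => stmt7_general hη (hPnonexp (c - η • g) u hu)
end
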